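/- Define ψ : ℝ × ℝ → ℂ by ψ(x, y) = e^{ixy/(4π)} · Σ_{m ∈ ℤ} e^{imx} · e^{-(2πm + y)²/(4π)} (the series over m ∈ ℤ converges absolutely for every (x,y)). Then ψ is even under the reflection P_{++}: ψ(-x, -y) = ψ(x, y) for all x, y ∈ ℝ. (The ground state of the Hall effect on the torus with unit magnetic charge is P_{++}-parity even.) -/

import Mathlib

open Complex

/-- The `m`-th term of the lowest Landau level series: `e^{imx}·e^{-(2πm + y)²/(4π)}`. -/
noncomputable def lllTerm (x y : ℝ) (m : ℤ) : ℂ :=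
  Complex.exp (I * (m : ℂ) * (x : ℂ))
    * (Real.exp (-(2 * Real.pi * (m : ℝ) + y)^2 / (4 * Real.pi)) : ℂ)

/-- The lowest Landau level wavefunction on the torus for unit magnetic charge:
`ψ(x, y) = e^{ixy/(4π)} · Σ_{m ∈ ℤ} e^{imx}·e^{-(2πm + y)²/(4π)}`. -/
noncomputable def lll (x y : ℝ) : ℂ :=
  Complex.exp (I * (x : ℂ) * (y : ℂ) / (4 * (Real.pi : ℂ))) * ∑' m : ℤ, lllTerm x y m

/-- The lowest Landau level series is, up to a factor independent of `m`, a Jacobi theta series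
with `τ = i` and `z = (x + iy)/(2π)`. -/
theorem lllTerm_eq_jacobiTheta₂_term (x y : ℝ) (m : ℤ) :
    lllTerm x y m = cexp (-(y : ℂ) ^ 2 / (4 * Real.pi))
      * jacobiTheta₂_term m (((x : ℂ) + I * y) / (2 * Real.pi)) I := by
  have hpi : (Real.pi : ℂ) ≠ 0 := by exact_mod_cast Real.pi_ne_zero
  rw [lllTerm, jacobiTheta₂_term, Complex.ofReal_exp, ← Complex.exp_add, ← Complex.exp_add]
  congr 1
  push_cast
  field_simp
  linear_combination (-4 * (Real.pi : ℂ) * m * y - 4 * (Real.pi : ℂ) ^ 2 * m ^ 2) * I_sq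

theorem summable_lllTerm (x y : ℝ) : Summable (lllTerm x y) := by
  simp_rw [funext (lllTerm_eq_jacobiTheta₂_term x y)]
  exact ((summable_jacobiTheta₂_term_iff _ _).2 (by simp)).mul_left _

theorem lllTerm_neg_neg (x y : ℝ) (m : ℤ) : lllTerm (-x) (-y) (-m) = lllTerm x y m := by
  unfold lllTerm
  push_cast
  ring_nf

/-- **The ground state of the Hall effect on the torus with unit magnetic charge is
`P₊₊`-parity even**: the series converges absolutely for every `(x, y)`, and
`ψ(-x, -y) = ψ(x, y)` for all `x, y`. -/
theorem lll_parity_even :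
    (∀ x y : ℝ, Summable fun m : ℤ => ‖lllTerm x y m‖) ∧
    (∀ x y : ℝ, lll (-x) (-y) = lll x y) := by
  refine ⟨fun x y => (summable_lllTerm x y).norm, fun x y => ?_⟩
  have hsum : ∑' m : ℤ, lllTerm (-x) (-y) m = ∑' m : ℤ, lllTerm x y m := by
    rw [← (Equiv.neg ℤ).tsum_eq]
    exact tsum_congr (lllTerm_neg_neg x y)
  rw [lll, lll, hsum]
  push_cast
  ring_nf
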